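/- Let U ⊆ ℂ be open with every connected component simply connected, and let f : U → ℂ be holomorphic. Let P ⊆ U be open with f(P) ⊆ P and with every connected component of P simply connected. Let B be the set of points z such that for some n ≥ 0 the orbit z, f(z), …, f^{n-1}(z) stays in U and fⁿ(z) ∈ P. Then every connected component of B is simply connected. -/

import Mathlib

/-!
Call a set `S` full if every bounded open set with frontier in `S` lies in `S`. Fullness passes to
increasing unions of open sets, since the frontier is compact, and to holomorphic preimages, since
a nonconstant holomorphic map sends a bounded domain `D` to a bounded domain with frontier in
`f (frontier D)`. So it is enough that an open `S ⊆ ℂ` is full exactly when all its components are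
simply connected.

If the components are simply connected, `z - b` has a logarithm on `S` for every `b ∉ S`, which a
bounded open set with frontier in `S` and containing `b` would turn into a logarithm near infinity.

Conversely, let `W` be full and connected and `γ` a loop in `W`. Transport along segments is a
cocycle on `W` with values in the fundamental group, and `γ` is null-homotopic as soon as this
cocycle has a primitive along `γ`. On a fine square grid the cocycle labels the edges, flatly around
every cell inside `W`. As `W` is full, each finite family of the other cells has an edge on its
outer boundary which does not matter for the cells in `W`; peeling off cells through such edges, one
can relabel so that every cell of a large box is flat. A flat labelling of a box has a potential.
-/

open Set Filter Topology Metric Bornology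

/-! ### Full sets -/

/-- A set `S` is *full* if no bounded open set whose frontier lies in `S` sticks out of `S`: in a
connected space, a full open set has no holes. For open subsets of `ℂ` this is the form in which
simple connectivity of the components is carried through the argument. -/
def IsFull {X : Type*} [TopologicalSpace X] [Bornology X] (S : Set X) : Prop :=
  ∀ ⦃D : Set X⦄, IsOpen D → IsBounded D → frontier D ⊆ S → D ⊆ S

section Components

variable {X : Type*} [TopologicalSpace X] [LocallyConnectedSpace X] {S : Set X}

theorem isOpen_sdiff_connectedComponentIn (hS : IsOpen S) (x : X) :
    IsOpen (S \ connectedComponentIn S x) := by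
  refine isOpen_iff_forall_mem_open.mpr fun y ⟨hyS, hyx⟩ => ?_
  refine ⟨connectedComponentIn S y, fun z hz => ⟨connectedComponentIn_subset S y hz, fun hzx => ?_⟩,
    hS.connectedComponentIn, mem_connectedComponentIn hyS⟩
  exact hyx ((connectedComponentIn_eq hzx).trans (connectedComponentIn_eq hz).symm ▸
    mem_connectedComponentIn hyS)

theorem frontier_connectedComponentIn_subset (hS : IsOpen S) (x : X) :
    frontier (connectedComponentIn S x) ⊆ frontier S := by
  rw [hS.frontier_eq, hS.connectedComponentIn.frontier_eq]
  refine fun y ⟨hy, hyx⟩ =>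
    ⟨closure_mono (connectedComponentIn_subset S x) hy, fun hyS => ?_⟩
  exact (disjoint_sdiff_right.closure_left (isOpen_sdiff_connectedComponentIn hS x)).le_bot
    ⟨hy, hyS, hyx⟩

protected theorem IsFull.connectedComponentIn [Bornology X] [PreconnectedSpace X] (h : IsFull S)
    (hS : IsOpen S) {x : X} (hx : x ∈ S) : IsFull (connectedComponentIn S x) := by
  intro D hD hDb hDx
  set C := connectedComponentIn S x
  have hDS : D ⊆ S := h hD hDb (hDx.trans (connectedComponentIn_subset S x))
  have hopen : D \ C = D ∩ (S \ C) := by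
    rw [← inter_sdiff_assoc, inter_eq_left.mpr hDS]
  have hclosed : D \ C = closure D \ C := by
    rw [closure_eq_self_union_frontier, union_sdiff_distrib, sdiff_eq_empty.mpr hDx, union_empty]
  have hclopen : IsClopen (D \ C) :=
    ⟨hclosed ▸ isClosed_closure.sdiff hS.connectedComponentIn,
      hopen ▸ hD.inter (isOpen_sdiff_connectedComponentIn hS x)⟩
  rcases isClopen_iff.mp hclopen with hempty | huniv
  · exact sdiff_eq_empty.mp hempty
  · exact absurd (mem_connectedComponentIn hx) (huniv ▸ mem_univ x : x ∈ D \ C).2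

end Components

theorem IsFull.iUnion {X ι : Type*} [PseudoMetricSpace X] [ProperSpace X] [Nonempty ι]
    {A : ι → Set X} (hdir : Directed (· ⊆ ·) A) (hopen : ∀ i, IsOpen (A i))
    (hA : ∀ i, IsFull (A i)) : IsFull (⋃ i, A i) := by
  intro D hD hDb hDA
  have hcpt : IsCompact (frontier D) :=
    hDb.isCompact_closure.of_isClosed_subset isClosed_frontier frontier_subset_closure
  obtain ⟨i, hi⟩ := hcpt.elim_directed_cover A hopen hDA hdir
  exact (hA i hD hDb hi).trans (subset_iUnion A i)

theorem IsFull.inter_preimage {U S : Set ℂ} {f : ℂ → ℂ} (hUfull : IsFull U)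
    (hf : DifferentiableOn ℂ f U) (hS : IsFull S) :
    IsFull (U ∩ f ⁻¹' S) := by
  intro D hD hDb hDS a ha
  have hDU : D ⊆ U := hUfull hD hDb (hDS.trans inter_subset_left)
  refine ⟨hDU ha, ?_⟩
  set C := connectedComponentIn D a
  have haC : a ∈ C := mem_connectedComponentIn ha
  have hC : IsOpen C := hD.connectedComponentIn
  have hCb : IsBounded C := hDb.subset (connectedComponentIn_subset D a)
  have hCS : frontier C ⊆ U ∩ f ⁻¹' S := (frontier_connectedComponentIn_subset hD a).trans hDS
  have hCU : closure C ⊆ U := by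
    rw [closure_eq_self_union_frontier]
    exact union_subset ((connectedComponentIn_subset D a).trans hDU)
      (hCS.trans inter_subset_left)
  have hcont : ContinuousOn f (closure C) := hf.continuousOn.mono hCU
  have hcpt : IsCompact (closure C) := hCb.isCompact_closure
  have han : AnalyticOnNhd ℂ f C := (hf.mono (subset_closure.trans hCU)).analyticOnNhd hC
  rcases han.is_constant_or_isOpen isPreconnected_connectedComponentIn with ⟨w, hw⟩ | hfopen
  · obtain ⟨b, hb⟩ : (frontier C).Nonempty := nonempty_frontier_iff.mpr
      ⟨⟨a, haC⟩, fun h => NormedSpace.unbounded_univ ℂ ℂ (h ▸ hCb)⟩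
    have hfb : f b = w :=
      (show EqOn f (fun _ => w) C from hw).of_subset_closure hcont continuousOn_const
        subset_closure subset_rfl (frontier_subset_closure hb)
    rw [mem_preimage, hw a haC, ← hfb]
    exact (hCS hb).2
  · have hfC : closure (f '' C) ⊆ f '' closure C :=
      closure_minimal (image_mono subset_closure) (hcpt.image_of_continuousOn hcont).isClosed
    have himage : IsOpen (f '' C) := hfopen C subset_rfl hC
    refine hS himage ((hcpt.image_of_continuousOn hcont).isBounded.subset
      (image_mono subset_closure)) ?_ (mem_image_of_mem f haC)
    rw [himage.frontier_eq]
    rintro _ ⟨hy, hyC⟩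
    obtain ⟨z, hz, rfl⟩ := hfC hy
    exact (hCS (hC.frontier_eq ▸ ⟨hz, fun hzC => hyC (mem_image_of_mem f hzC)⟩)).2

/-! ### Simply connected components give full sets -/

theorem exists_continuousOn_eqOn_exp_comp_of_components {X : Type*} [TopologicalSpace X]
    [LocallyPathConnectedSpace X] {S : Set X} {g : X → ℂ} (hS : IsOpen S)
    (hsc : ∀ x ∈ S, SimplyConnectedSpace (connectedComponentIn S x)) (hg : ContinuousOn g S)
    (hg₀ : 0 ∉ g '' S) :
    ∃ l : X → ℂ, ContinuousOn l S ∧ EqOn (Complex.exp ∘ l) g S := by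
  have hlog : ∀ C ∈ connectedComponentIn S '' S,
      ∃ l : X → ℂ, ContinuousOn l C ∧ EqOn (Complex.exp ∘ l) g C := by
    rintro _ ⟨x, hx, rfl⟩
    have hxS := connectedComponentIn_subset S x
    exact Complex.exists_continuousOn_eqOn_exp_comp (hsc x hx) hS.connectedComponentIn
      (hg.mono hxS) fun h => hg₀ (image_mono hxS h)
  choose! l hl hexp using hlog
  refine ⟨fun z => l (connectedComponentIn S z) z, fun z hz => ?_,
    fun z hz => hexp _ (mem_image_of_mem _ hz) (mem_connectedComponentIn hz)⟩
  have hnhds : connectedComponentIn S z ∈ 𝓝 z :=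
    hS.connectedComponentIn.mem_nhds (mem_connectedComponentIn hz)
  refine (((hl _ (mem_image_of_mem _ hz)).continuousAt hnhds).congr ?_).continuousWithinAt
  filter_upwards [hnhds] with w hw
  rw [connectedComponentIn_eq hw]

theorem not_exists_continuousOn_log_compl_closedBall (b : ℂ) (R : ℝ) :
    ¬ ∃ k : ℂ → ℂ, ContinuousOn k (closedBall b R)ᶜ ∧
      ∀ z ∈ (closedBall b R)ᶜ, Complex.exp (k z) = z - b := by
  rintro ⟨k, hk, hexp⟩
  have hnhds : ∀ z ∈ (closedBall b R)ᶜ, (closedBall b R)ᶜ ∈ 𝓝 z :=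
    fun z hz => isClosed_closedBall.isOpen_compl.mem_nhds hz
  have hderiv : ∀ z ∈ (closedBall b R)ᶜ, HasDerivAt k (z - b)⁻¹ z := fun z hz => by
    rw [← hexp z hz]
    refine HasDerivAt.of_local_left_inverse (f := fun w => Complex.exp w + b)
      (hk.continuousAt (hnhds z hz)) ((Complex.hasDerivAt_exp _).add_const b)
      (Complex.exp_ne_zero _) ?_
    filter_upwards [hnhds z hz] with w hw
    rw [hexp w hw, sub_add_cancel]
  have hsphere : sphere b (|R| + 1) ⊆ (closedBall b R)ᶜ := fun z hz h => by
    rw [mem_sphere] at hz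
    rw [mem_closedBall] at h
    linarith [le_abs_self R]
  have hzero : ∮ z in C(b, |R| + 1), (z - b)⁻¹ = 0 :=
    circleIntegral.integral_eq_zero_of_hasDerivWithinAt (by positivity)
      fun z hz => (hderiv z (hsphere hz)).hasDerivWithinAt
  rw [circleIntegral.integral_sub_center_inv b (by positivity)] at hzero
  exact Complex.two_pi_I_ne_zero hzero

theorem isSimplyConnected_of_convex {E : Type*} [AddCommGroup E] [Module ℝ E]
    [TopologicalSpace E] [ContinuousAdd E] [ContinuousSMul ℝ E] {C : Set E} (hC : Convex ℝ C)
    (hne : C.Nonempty) : IsSimplyConnected C :=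
  have := hC.contractibleSpace hne
  SimplyConnectedSpace.ofContractible C

/-- Splice a logarithm of `z - b` on `S` into the bounded hole `D`: outside `D` it is `z - b`, so
it would have a logarithm near infinity. -/
theorem isFull_of_simplyConnectedSpace {S : Set ℂ} (hS : IsOpen S)
    (hsc : ∀ x ∈ S, SimplyConnectedSpace (connectedComponentIn S x)) : IsFull S := by
  intro D _ hDb hDS b hbD
  by_contra hbS
  obtain ⟨l, hl, hexp⟩ := exists_continuousOn_eqOn_exp_comp_of_components (g := fun z => z - b)
    hS hsc (by fun_prop) (by rintro ⟨z, hz, h⟩; exact hbS (sub_eq_zero.mp h ▸ hz))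
  obtain ⟨T, hT⟩ := ContinuousMap.exists_restrict_eq isClosed_frontier
    ⟨(frontier D).domRestrict l, (hl.mono hDS).domRestrict⟩
  have hTl : ∀ z ∈ frontier D, T z = l z := fun z hz => congr($hT ⟨z, hz⟩)
  classical
  set h : ℂ → ℂ := D.piecewise (Complex.exp ∘ T) (fun z => z - b)
  have hh : Continuous h := by
    refine Continuous.piecewise (fun z hz => ?_) (by fun_prop) (by fun_prop)
    rw [Function.comp_apply, hTl z hz]
    exact hexp (hDS hz)
  have hh₀ : 0 ∉ h '' univ := by
    rintro ⟨z, -, hz⟩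
    by_cases hzD : z ∈ D
    · exact Complex.exp_ne_zero _ ((piecewise_eq_of_mem D (Complex.exp ∘ T) _ hzD).symm.trans hz)
    · rw [show h z = z - b from piecewise_eq_of_notMem D _ _ hzD, sub_eq_zero] at hz
      exact hzD (hz ▸ hbD)
  obtain ⟨k, hk, hkexp⟩ := Complex.exists_continuousOn_eqOn_exp_comp
    (isSimplyConnected_of_convex convex_univ univ_nonempty) isOpen_univ hh.continuousOn hh₀
  obtain ⟨R, hR⟩ := hDb.subset_closedBall b
  refine not_exists_continuousOn_log_compl_closedBall b R
    ⟨k, hk.mono (subset_univ _), fun z hz => (hkexp (mem_univ z)).trans ?_⟩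
  exact piecewise_eq_of_notMem D _ _ fun hzD => hz (hR hzD)

/-! ### Holonomy -/

section Holonomy

variable {X : Type*} [TopologicalSpace X] [PathConnectedSpace X]

/-- The loop at `x₀` that runs along a chosen path to `x`, along `p`, and back from `y` along a
chosen path. It trivialises the fundamental groupoid, whose transport it turns into left
multiplication. -/
noncomputable def holonomy (x₀ : X) {x y : X} (p : Path x y) : FundamentalGroup X x₀ :=
  .fromPath (.mk (((PathConnectedSpace.somePath x₀ x).trans p).trans
    (PathConnectedSpace.somePath x₀ y).symm))

variable (x₀ : X) {x y z : X}

theorem holonomy_eq_of_homotopic {p q : Path x y} (h : p.Homotopic q) :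
    holonomy x₀ p = holonomy x₀ q :=
  Path.Homotopic.Quotient.eq.mpr (((Path.Homotopic.refl _).hcomp h).hcomp (.refl _))

theorem holonomy_cast {x' y' : X} (p : Path x y) (hx : x' = x) (hy : y' = y) :
    holonomy x₀ (p.cast hx hy) = holonomy x₀ p := by
  subst hx hy
  rfl

open Path.Homotopic.Quotient in
theorem holonomy_trans (p : Path x y) (q : Path y z) :
    holonomy x₀ (p.trans q) = holonomy x₀ q * holonomy x₀ p := by
  simp only [holonomy, FundamentalGroup.mul_def, mk_trans, mk_symm, trans_assoc]
  rw [← trans_assoc (symm _) (mk (PathConnectedSpace.somePath x₀ y)), symm_trans, refl_trans]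

theorem holonomy_refl : holonomy x₀ (Path.refl x) = 1 := by
  have h := holonomy_trans x₀ (Path.refl x) (Path.refl x)
  rwa [Path.refl_trans_refl, right_eq_mul] at h

open Path.Homotopic.Quotient in
theorem homotopic_refl_of_holonomy_eq_one {p : Path x x} (h : holonomy x₀ p = 1) :
    p.Homotopic (Path.refl x) := by
  set b := mk (PathConnectedSpace.somePath x₀ x)
  have hb : (b.trans (mk p)).trans b.symm = refl x₀ := by
    rw [← mk_symm, ← mk_trans, ← mk_trans]
    exact h
  have hconj : (b.symm.trans ((b.trans (mk p)).trans b.symm)).trans b = mk p := by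
    simp only [trans_assoc, symm_trans, trans_refl]
    rw [← trans_assoc, symm_trans, refl_trans]
  rw [hb, trans_refl, symm_trans] at hconj
  exact (Path.Homotopic.Quotient.eq.mp hconj).symm

end Holonomy

/-- Restriction of the codomain of a path to a set which contains its range. -/
def pathCodRestrict {X : Type*} [TopologicalSpace X] {S : Set X} {x y : X} (p : Path x y)
    (hp : ∀ t, p t ∈ S) : Path (⟨x, p.source ▸ hp 0⟩ : S) ⟨y, p.target ▸ hp 1⟩ where
  toFun t := ⟨p t, hp t⟩
  continuous_toFun := by fun_prop
  source' := Subtype.ext p.source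
  target' := Subtype.ext p.target

section Cocycle

variable {E : Type*} [AddCommGroup E] [Module ℝ E] {Γ : Type*} {W : Set E} {m : E → E → Γ}

/-- The cocycle identity for `m` on every triangle that lies in a convex subset of `W`. The
factors are in the order in which transport along a path acts from the left. -/
def IsConvexCocycle [Mul Γ] (W : Set E) (m : E → E → Γ) : Prop :=
  ∀ ⦃C⦄, Convex ℝ C → C ⊆ W → ∀ x ∈ C, ∀ y ∈ C, ∀ z ∈ C, m y z * m x y = m x z

theorem IsConvexCocycle.self_eq_one [Group Γ] (hm : IsConvexCocycle W m) {x : E} (hx : x ∈ W) :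
    m x x = 1 :=
  mul_eq_left.mp (hm (convex_singleton x) (singleton_subset_iff.mpr hx) x rfl x rfl x rfl)

theorem IsConvexCocycle.comp_linearMap [Mul Γ] (hm : IsConvexCocycle W m) {F : Type*}
    [AddCommGroup F] [Module ℝ F] (L : F →ₗ[ℝ] E) :
    IsConvexCocycle (L ⁻¹' W) (fun x y => m (L x) (L y)) :=
  fun _ hC hCW _ hx _ hy _ hz => hm (hC.linear_image L) (image_subset_iff.mpr hCW)
    _ (mem_image_of_mem L hx) _ (mem_image_of_mem L hy) _ (mem_image_of_mem L hz)

end Cocycle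

section Convex

variable {E : Type*} [AddCommGroup E] [Module ℝ E] [TopologicalSpace E] [ContinuousAdd E]
  [ContinuousSMul ℝ E] {W C : Set E}

theorem homotopic_of_convex (hC : Convex ℝ C) (hCW : C ⊆ W) {x y : W} (p q : Path x y)
    (hp : ∀ t, (p t : E) ∈ C) (hq : ∀ t, (q t : E) ∈ C) : p.Homotopic q := by
  have : SimplyConnectedSpace C := isSimplyConnected_of_convex hC ⟨p 0, hp 0⟩
  exact (SimplyConnectedSpace.paths_homotopic
    (pathCodRestrict (p.map continuous_subtype_val) hp)
    (pathCodRestrict (q.map continuous_subtype_val) hq)).map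
      ⟨inclusion hCW, continuous_inclusion hCW⟩

theorem path_segment_mem_segment (x y : E) (t : unitInterval) :
    Path.segment x y t ∈ segment ℝ x y :=
  (convex_segment x y).lineMap_mem (left_mem_segment ℝ x y) (right_mem_segment ℝ x y) t.2

open Classical in
/-- The holonomy in `W` of the straight path from `x` to `y`; it is `1` by convention if that
path leaves `W`. -/
noncomputable def segmentHolonomy [PathConnectedSpace W] (x₀ : W) (x y : E) :
    FundamentalGroup W x₀ :=
  if h : segment ℝ x y ⊆ W then
    holonomy x₀ (pathCodRestrict (Path.segment x y)
      fun t => h (path_segment_mem_segment x y t))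
  else 1

theorem holonomy_eq_segmentHolonomy [PathConnectedSpace W] (x₀ : W) (hC : Convex ℝ C)
    (hCW : C ⊆ W) {x y : W} (p : Path x y) (hp : ∀ t, (p t : E) ∈ C) :
    holonomy x₀ p = segmentHolonomy x₀ (x : E) y := by
  have hseg : segment ℝ (x : E) y ⊆ C :=
    hC.segment_subset (by simpa using hp 0) (by simpa using hp 1)
  rw [segmentHolonomy, dif_pos (hseg.trans hCW)]
  exact holonomy_eq_of_homotopic x₀ (homotopic_of_convex hC hCW _ _ hp fun t =>
    hseg (path_segment_mem_segment (x : E) y t))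

theorem isConvexCocycle_segmentHolonomy [PathConnectedSpace W] (x₀ : W) :
    IsConvexCocycle W (segmentHolonomy x₀) := by
  intro C hC hCW x hx y hy z hz
  have hseg : ∀ {a b : E}, a ∈ C → b ∈ C → ∀ t, Path.segment a b t ∈ C := fun {a b} ha hb t =>
    hC.lineMap_mem ha hb t.2
  let p := pathCodRestrict (S := W) (Path.segment x y) fun t => hCW (hseg hx hy t)
  let q := pathCodRestrict (S := W) (Path.segment y z) fun t => hCW (hseg hy hz t)
  have hpq : ∀ t, ((p.trans q) t : E) ∈ C := by
    have hrange : range (p.trans q) ⊆ Subtype.val ⁻¹' C := by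
      rw [Path.trans_range]
      exact union_subset (range_subset_iff.mpr (hseg hx hy)) (range_subset_iff.mpr (hseg hy hz))
    exact fun t => hrange (mem_range_self t)
  rw [← holonomy_eq_segmentHolonomy x₀ hC hCW p (hseg hx hy),
    ← holonomy_eq_segmentHolonomy x₀ hC hCW q (hseg hy hz), ← holonomy_trans,
    holonomy_eq_segmentHolonomy x₀ hC hCW _ hpq]

end Convex

/-- `Φ` is a primitive of the cocycle `m` on `K`: nearby values of `Φ` differ by `m`. -/
def IsPrimitiveOn {X Γ : Type*} [TopologicalSpace X] [Mul Γ] (K : Set X) (m : X → X → Γ)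
    (Φ : X → Γ) : Prop :=
  ∀ x ∈ K, ∀ᶠ y in 𝓝[K] x, Φ y = m x y * Φ x

theorem IsPrimitiveOn.comp {X Y Γ : Type*} [TopologicalSpace X] [TopologicalSpace Y] [Mul Γ]
    {K : Set X} {g : X → Y} {m : Y → Y → Γ} {Φ : Y → Γ} (hΦ : IsPrimitiveOn (g '' K) m Φ)
    (hg : ContinuousOn g K) : IsPrimitiveOn K (fun x y => m (g x) (g y)) (Φ ∘ g) :=
  fun x hx => (hg x hx).tendsto_nhdsWithin_image.eventually (hΦ _ (mem_image_of_mem g hx))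

section Monodromy

variable {E : Type*} [NormedAddCommGroup E] [NormedSpace ℝ E] {W : Set E} [PathConnectedSpace W]

theorem eventually_holonomy_subpath_eq (hW : IsOpen W) (x₀ : W) {x y : W} (γ : Path x y)
    (s : unitInterval) :
    ∀ᶠ t in 𝓝 s, holonomy x₀ (γ.subpath s t) = segmentHolonomy x₀ (γ s : E) (γ t) := by
  obtain ⟨ε, hε, hball⟩ := Metric.isOpen_iff.mp hW (γ s) (γ s).2
  have hcont : ContinuousAt (fun t => (γ t : E)) s := by fun_prop
  have huIcc : ∀ᶠ t in 𝓝 s, uIcc s t ⊆ (fun t => (γ t : E)) ⁻¹' ball (γ s) ε :=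
    tendsto_smallSets_iff.mp (tendsto_const_nhds.uIcc tendsto_id) _
      (hcont (ball_mem_nhds _ hε))
  filter_upwards [huIcc] with t ht
  refine holonomy_eq_segmentHolonomy x₀ (convex_ball _ _) hball _ fun u => ?_
  obtain ⟨v, hv, huv⟩ : γ.subpath s t u ∈ γ '' uIcc s t :=
    Path.range_subpath γ s t ▸ mem_range_self u
  exact huv ▸ ht hv

theorem holonomy_mul_of_isPrimitiveOn_range (hW : IsOpen W) (x₀ : W) {x y : W} (γ : Path x y)
    {Φ : E → FundamentalGroup W x₀}
    (hΦ : IsPrimitiveOn (range fun t => (γ t : E)) (segmentHolonomy x₀) Φ) :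
    holonomy x₀ γ * Φ x = Φ y := by
  let F : unitInterval → FundamentalGroup W x₀ :=
    fun t => (holonomy x₀ (γ.subpath 0 t))⁻¹ * Φ (γ t)
  have hF : IsLocallyConstant F := by
    refine (IsLocallyConstant.iff_eventually_eq F).mpr fun s => ?_
    have hcont : ContinuousAt (fun t => (γ t : E)) s := by fun_prop
    have hprim : ∀ᶠ t in 𝓝 s, Φ (γ t) = segmentHolonomy x₀ (γ s : E) (γ t) * Φ (γ s) :=
      (tendsto_nhdsWithin_range.mpr hcont).eventually (hΦ _ (mem_range_self s))
    filter_upwards [eventually_holonomy_subpath_eq hW x₀ γ s, hprim] with t hst hprim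
    have hsplit : holonomy x₀ (γ.subpath 0 t) =
        holonomy x₀ (γ.subpath s t) * holonomy x₀ (γ.subpath 0 s) := by
      rw [← holonomy_trans]
      exact holonomy_eq_of_homotopic x₀ ⟨(Path.Homotopy.subpathTransSubpath γ 0 s t).symm⟩
    simp only [F]
    rw [hsplit, hprim, hst]
    group
  have h01 : F 0 = F 1 := hF.apply_eq_of_preconnectedSpace 0 1
  simp only [F, Path.subpath_self, Path.subpath_zero_one, holonomy_cast, holonomy_refl,
    Path.source, Path.target, inv_one, one_mul] at h01
  rw [h01, mul_inv_cancel_left]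

theorem homotopic_refl_of_isPrimitiveOn_range (hW : IsOpen W) (x₀ : W) {x : W} (γ : Path x x)
    {Φ : E → FundamentalGroup W x₀}
    (hΦ : IsPrimitiveOn (range fun t => (γ t : E)) (segmentHolonomy x₀) Φ) :
    γ.Homotopic (Path.refl x) :=
  homotopic_refl_of_holonomy_eq_one x₀ <|
    mul_eq_right.mp (holonomy_mul_of_isPrimitiveOn_range hW x₀ γ hΦ)

end Monodromy

/-! ### Labellings of the edges of a square grid -/

theorem exists_int_recurrence {α : Type*} (f : ℤ → α → α) (a : ℤ) (x : α) :
    ∃ r : ℤ → α, r a = x ∧ ∀ k ≥ a, r (k + 1) = f k (r k) :=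
  ⟨fun k => k.inductionOn' a x (fun k _ y => f k y) fun _ _ y => y,
    Int.inductionOn'_self, fun _ hk => Int.inductionOn'_add_one hk⟩

/-- An edge of the square grid `ℤ × ℤ`: `horiz i j` runs from `(i, j)` to `(i + 1, j)` and
`vert i j` from `(i, j)` to `(i, j + 1)`. -/
inductive GridEdge
  | horiz (i j : ℤ)
  | vert (i j : ℤ)
  deriving DecidableEq

namespace GridEdge

/-- The initial vertex of an edge. -/
def source : GridEdge → ℤ × ℤ
  | horiz i j => (i, j)
  | vert i j => (i, j)

/-- The final vertex of an edge. -/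
def target : GridEdge → ℤ × ℤ
  | horiz i j => (i + 1, j)
  | vert i j => (i, j + 1)

/-- The four sides of a unit cell of the grid; a cell is named by its lower left corner. -/
def sides (c : ℤ × ℤ) : Set GridEdge :=
  {horiz c.1 c.2, horiz c.1 (c.2 + 1), vert c.1 c.2, vert (c.1 + 1) c.2}

theorem horiz_mem_sides {i j : ℤ} {c : ℤ × ℤ} :
    horiz i j ∈ sides c ↔ i = c.1 ∧ (j = c.2 ∨ j = c.2 + 1) := by
  simp only [sides, mem_insert_iff, mem_singleton_iff, horiz.injEq, reduceCtorEq, or_false]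
  lia

theorem vert_mem_sides {i j : ℤ} {c : ℤ × ℤ} :
    vert i j ∈ sides c ↔ j = c.2 ∧ (i = c.1 ∨ i = c.1 + 1) := by
  simp only [sides, mem_insert_iff, mem_singleton_iff, vert.injEq, reduceCtorEq, false_or]
  lia

theorem eq_or_eq_of_mem_sides {e : GridEdge} {c d c' : ℤ × ℤ} (hc : e ∈ sides c)
    (hd : e ∈ sides d) (hcd : c ≠ d) (hc' : e ∈ sides c') : c' = c ∨ c' = d := by
  cases e <;> simp only [horiz_mem_sides, vert_mem_sides, ne_eq, Prod.ext_iff] at * <;> lia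

variable {Γ : Type*} [Group Γ]

/-- The labels of the sides of `c` multiply to the same element along both ways from the lower
left to the upper right corner. -/
def IsFlat (ℓ : GridEdge → Γ) (c : ℤ × ℤ) : Prop :=
  ℓ (vert (c.1 + 1) c.2) * ℓ (horiz c.1 c.2) = ℓ (horiz c.1 (c.2 + 1)) * ℓ (vert c.1 c.2)

theorem IsFlat.congr {ℓ ℓ' : GridEdge → Γ} {c : ℤ × ℤ} (h : IsFlat ℓ c)
    (heq : EqOn ℓ' ℓ (sides c)) : IsFlat ℓ' c := by
  simp only [EqOn, sides, mem_insert_iff, mem_singleton_iff, forall_eq_or_imp, forall_eq] at heq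
  obtain ⟨hbottom, htop, hleft, hright⟩ := heq
  rw [IsFlat, hbottom, htop, hleft, hright]
  exact h

theorem exists_isFlat_update (ℓ : GridEdge → Γ) {e : GridEdge} {c : ℤ × ℤ} (he : e ∈ sides c) :
    ∃ g, IsFlat (Function.update ℓ e g) c := by
  obtain ⟨i, j⟩ := c
  simp only [sides, mem_insert_iff, mem_singleton_iff] at he
  rcases he with rfl | rfl | rfl | rfl
  · exact ⟨(ℓ (vert (i + 1) j))⁻¹ * (ℓ (horiz i (j + 1)) * ℓ (vert i j)), by simp [IsFlat]⟩
  · exact ⟨ℓ (vert (i + 1) j) * ℓ (horiz i j) * (ℓ (vert i j))⁻¹, by simp [IsFlat]⟩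
  · exact ⟨(ℓ (horiz i (j + 1)))⁻¹ * (ℓ (vert (i + 1) j) * ℓ (horiz i j)), by simp [IsFlat]⟩
  · exact ⟨ℓ (horiz i (j + 1)) * ℓ (vert i j) * (ℓ (horiz i j))⁻¹, by simp [IsFlat]⟩

/-- Cells are peeled off one at a time through an edge that no remaining cell uses; putting them
back in reverse order, that edge is relabelled so as to make the cell flat. -/
theorem exists_isFlat_labelling {free : Set GridEdge} {T : Finset (ℤ × ℤ)}
    (hexit : ∀ T' ⊆ T, T'.Nonempty →
      ∃ c ∈ T', ∃ e ∈ sides c, e ∈ free ∧ ∀ c' ∈ T', e ∈ sides c' → c' = c)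
    (ℓ₀ : GridEdge → Γ) :
    ∃ ℓ, EqOn ℓ ℓ₀ freeᶜ ∧ ∀ c ∈ T, IsFlat ℓ c := by
  induction T using Finset.strongInduction with
  | H T ih =>
    rcases T.eq_empty_or_nonempty with rfl | hT
    · exact ⟨ℓ₀, eqOn_refl _ _, by simp⟩
    obtain ⟨c, hc, e, hec, hefree, huniq⟩ := hexit T subset_rfl hT
    obtain ⟨ℓ, hℓ₀, hflat⟩ := ih (T.erase c) (Finset.erase_ssubset hc)
      fun T' hT' => hexit T' (hT'.trans (T.erase_subset c))
    obtain ⟨g, hg⟩ := exists_isFlat_update ℓ hec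
    refine ⟨Function.update ℓ e g, fun e' he' => ?_, fun c' hc' => ?_⟩
    · rw [Function.update_of_ne (ne_of_mem_of_not_mem hefree he').symm, hℓ₀ he']
    · rcases eq_or_ne c' c with rfl | hne
      · exact hg
      · refine (hflat c' (Finset.mem_erase.mpr ⟨hne, hc'⟩)).congr fun e' he' => ?_
        exact Function.update_of_ne (fun h : e' = e => hne (huniq c' hc' (h ▸ he'))) _ _

theorem exists_potential {ℓ : GridEdge → Γ} {a b : ℤ}
    (hflat : ∀ c ∈ Finset.Ico a b ×ˢ Finset.Ico a b, IsFlat ℓ c) :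
    ∃ φ : ℤ × ℤ → Γ, ∀ c ∈ Finset.Ico a b ×ˢ Finset.Ico a b, ∀ e ∈ sides c,
      φ e.target = ℓ e * φ e.source := by
  simp only [Finset.mem_product, Finset.mem_Ico, Prod.forall, and_imp] at hflat ⊢
  obtain ⟨r, -, hr⟩ := exists_int_recurrence (fun i g => ℓ (horiz i a) * g) a 1
  choose s hsa hs using fun i => exists_int_recurrence (fun j g => ℓ (vert i j) * g) a (r i)
  have hhoriz : ∀ i, a ≤ i → i < b → ∀ j, a ≤ j → j ≤ b →
      s (i + 1) j = ℓ (horiz i j) * s i j := by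
    intro i hai hib j haj
    induction j, haj using Int.leInduction with
    | base => exact fun _ => by rw [hsa, hsa, hr i hai]
    | succ j haj ih =>
      intro hjb
      have hij : IsFlat ℓ (i, j) := hflat i j hai hib haj (by lia)
      rw [hs _ j haj, hs _ j haj, ih (by lia), ← mul_assoc, ← mul_assoc, hij]
  refine ⟨fun v => s v.1 v.2, fun i j hai hib haj hjb e he => ?_⟩
  simp only [sides, mem_insert_iff, mem_singleton_iff] at he
  rcases he with rfl | rfl | rfl | rfl
  · exact hhoriz i hai hib j haj hjb.le
  · exact hhoriz i hai hib (j + 1) (by lia) (by lia)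
  · exact hs i j haj
  · exact hs (i + 1) j haj

end GridEdge

/-! ### The unit grid in the plane -/

/-- The closed unit square of the grid with lower left corner `c`. -/
def gridCell (c : ℤ × ℤ) : Set ℂ := Icc (c.1 : ℝ) (c.1 + 1) ×ℂ Icc (c.2 : ℝ) (c.2 + 1)

/-- The vertex `v` of the grid as a point of the plane. -/
def gridPoint (v : ℤ × ℤ) : ℂ := ⟨v.1, v.2⟩

/-- A cell of the grid containing `z`. -/
noncomputable def gridFloor (z : ℂ) : ℤ × ℤ := (⌊z.re⌋, ⌊z.im⌋)

theorem mem_gridCell {c : ℤ × ℤ} {z : ℂ} : z ∈ gridCell c ↔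
    (c.1 ≤ z.re ∧ z.re ≤ c.1 + 1) ∧ c.2 ≤ z.im ∧ z.im ≤ c.2 + 1 :=
  Iff.rfl

theorem gridPoint_mem_gridCell {v c : ℤ × ℤ} : gridPoint v ∈ gridCell c ↔
    (v.1 = c.1 ∨ v.1 = c.1 + 1) ∧ (v.2 = c.2 ∨ v.2 = c.2 + 1) := by
  simp only [mem_gridCell, gridPoint]
  norm_cast
  lia

theorem mem_gridCell_gridFloor (z : ℂ) : z ∈ gridCell (gridFloor z) :=
  ⟨⟨Int.floor_le _, (Int.lt_floor_add_one _).le⟩, Int.floor_le _, (Int.lt_floor_add_one _).le⟩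

theorem convex_gridCell (c : ℤ × ℤ) : Convex ℝ (gridCell c) :=
  (Convex.linear_preimage (convex_Icc _ _) Complex.reLm).inter
    (Convex.linear_preimage (convex_Icc _ _) Complex.imLm)

theorem isCompact_gridCell (c : ℤ × ℤ) : IsCompact (gridCell c) :=
  isCompact_Icc.reProdIm isCompact_Icc

theorem norm_sub_le_two_of_mem_gridCell {c : ℤ × ℤ} {z w : ℂ} (hz : z ∈ gridCell c)
    (hw : w ∈ gridCell c) : ‖z - w‖ ≤ 2 := by
  rw [mem_gridCell] at hz hw
  have hre : |(z - w).re| ≤ 1 := by rw [Complex.sub_re, abs_le]; constructor <;> linarith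
  have him : |(z - w).im| ≤ 1 := by rw [Complex.sub_im, abs_le]; constructor <;> linarith
  linarith [Complex.norm_le_abs_re_add_abs_im (z - w)]

theorem eventually_floor_le_floor_and_le_floor_add_one {R : Type*} [Ring R] [LinearOrder R]
    [IsStrictOrderedRing R] [FloorRing R] [TopologicalSpace R] [OrderTopology R] (x : R) :
    ∀ᶠ y in 𝓝 x, ⌊y⌋ ≤ ⌊x⌋ ∧ x ≤ ⌊y⌋ + 1 := by
  have hceil : ((⌈x⌉ - 1 : ℤ) : R) < x :=
    mod_cast sub_lt_iff_lt_add.mpr (Int.ceil_lt_add_one x)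
  filter_upwards [eventually_lt_nhds (Int.lt_floor_add_one x), eventually_gt_nhds hceil]
    with y hyx hxy
  refine ⟨Int.lt_add_one_iff.mp (Int.floor_lt.mpr (mod_cast hyx)), (Int.le_ceil x).trans ?_⟩
  exact_mod_cast sub_le_iff_le_add.mp (Int.le_floor.mpr hxy.le)

theorem eventually_mem_gridCell_gridFloor (z : ℂ) :
    ∀ᶠ w in 𝓝 z, z ∈ gridCell (gridFloor w) ∧
      gridPoint (gridFloor z) ∈ gridCell (gridFloor w) := by
  filter_upwards [Complex.continuous_re.continuousAt.eventually
      (eventually_floor_le_floor_and_le_floor_add_one z.re),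
    Complex.continuous_im.continuousAt.eventually
      (eventually_floor_le_floor_and_le_floor_add_one z.im)] with w ⟨hre, hre'⟩ ⟨him, him'⟩
  have hre₁ : (⌊w.re⌋ : ℝ) ≤ ⌊z.re⌋ := mod_cast hre
  have him₁ : (⌊w.im⌋ : ℝ) ≤ ⌊z.im⌋ := mod_cast him
  have hre₂ := Int.floor_le z.re
  have him₂ := Int.floor_le z.im
  exact ⟨⟨⟨hre₁.trans hre₂, hre'⟩, him₁.trans him₂, him'⟩,
    ⟨hre₁, hre₂.trans hre'⟩, him₁, him₂.trans him'⟩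

theorem exists_gridFloor_mem_box {K : Set ℂ} (hK : IsBounded K) :
    ∃ N : ℤ, ∀ z ∈ K, gridFloor z ∈ Finset.Ico (-N) N ×ˢ Finset.Ico (-N) N := by
  obtain ⟨R, hR⟩ := hK.exists_norm_le
  refine ⟨⌈R⌉ + 1, fun z hz => ?_⟩
  have hfloor : ∀ x : ℝ, |x| ≤ ‖z‖ → ⌊x⌋ ∈ Finset.Ico (-(⌈R⌉ + 1)) (⌈R⌉ + 1) := fun x hx => by
    have hxR := abs_le.mp (hx.trans ((hR z hz).trans (Int.le_ceil R)))
    rw [Finset.mem_Ico, Int.le_floor, Int.floor_lt]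
    push_cast
    constructor <;> linarith
  exact Finset.mem_product.mpr
    ⟨hfloor _ (Complex.abs_re_le_norm z), hfloor _ (Complex.abs_im_le_norm z)⟩

open GridEdge in
/-- The edges that may be relabelled: each carries with it a point outside `W`, common to all the
cells of which it is a side. -/
def freeEdges (W : Set ℂ) : Set GridEdge := {e | ∃ z ∉ W, ∀ c, e ∈ sides c → z ∈ gridCell c}

section Exit

open GridEdge

theorem sides_subset_compl_freeEdges {W : Set ℂ} {c : ℤ × ℤ} (hc : gridCell c ⊆ W) :
    sides c ⊆ (freeEdges W)ᶜ :=
  fun _ he ⟨_, hz, hze⟩ => hz (hc (hze c he))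

theorem exists_common_side {c d : ℤ × ℤ} {z : ℂ} (hzc : z ∈ gridCell c) (hzd : z ∈ gridCell d)
    (hcd : c.1 = d.1 ∨ c.2 = d.2) : ∃ e ∈ sides c, e ∈ sides d := by
  obtain ⟨⟨hc₁, hc₁'⟩, hc₂, hc₂'⟩ := mem_gridCell.mp hzc
  obtain ⟨⟨hd₁, hd₁'⟩, hd₂, hd₂'⟩ := mem_gridCell.mp hzd
  have h₁ : c.1 ≤ d.1 + 1 := by exact_mod_cast hc₁.trans hd₁'
  have h₂ : d.1 ≤ c.1 + 1 := by exact_mod_cast hd₁.trans hc₁'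
  have h₃ : c.2 ≤ d.2 + 1 := by exact_mod_cast hc₂.trans hd₂'
  have h₄ : d.2 ≤ c.2 + 1 := by exact_mod_cast hd₂.trans hc₂'
  rcases hcd with h | h
  · exact ⟨horiz c.1 (max c.2 d.2), horiz_mem_sides.mpr (by lia), horiz_mem_sides.mpr (by lia)⟩
  · exact ⟨vert (max c.1 d.1) c.2, vert_mem_sides.mpr (by lia), vert_mem_sides.mpr (by lia)⟩

variable {W : Set ℂ} {T : Finset (ℤ × ℤ)}
  (hno : ∀ c ∈ T, ∀ e ∈ sides c, e ∈ freeEdges W → ∃ c' ∈ T, e ∈ sides c' ∧ c' ≠ c)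
include hno

theorem mem_of_no_exit_of_adjacent {z : ℂ} (hz : z ∉ W) {c d : ℤ × ℤ} (hc : c ∈ T)
    (hzc : z ∈ gridCell c) (hzd : z ∈ gridCell d) (hcd : c.1 = d.1 ∨ c.2 = d.2) : d ∈ T := by
  rcases eq_or_ne c d with rfl | hne
  · exact hc
  obtain ⟨e, hec, hed⟩ := exists_common_side hzc hzd hcd
  have hfree : e ∈ freeEdges W := ⟨z, hz, fun c' hec' => by
    rcases eq_or_eq_of_mem_sides hec hed hne hec' with rfl | rfl <;> assumption⟩
  obtain ⟨c', hc', hec', hne'⟩ := hno c hc e hec hfree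
  exact (eq_or_eq_of_mem_sides hec hed hne hec').resolve_left hne' ▸ hc'

theorem mem_of_no_exit {z : ℂ} (hz : z ∉ W) {c d : ℤ × ℤ} (hc : c ∈ T) (hzc : z ∈ gridCell c)
    (hzd : z ∈ gridCell d) : d ∈ T := by
  have hzm : z ∈ gridCell (d.1, c.2) := ⟨hzd.1, hzc.2⟩
  have hm : (d.1, c.2) ∈ T := mem_of_no_exit_of_adjacent hno hz hc hzc hzm (.inr rfl)
  exact mem_of_no_exit_of_adjacent hno hz hm hzm hzd (.inl rfl)

theorem mem_interior_of_no_exit {z : ℂ} (hz : z ∉ W) (hzT : z ∈ ⋃ c ∈ T, gridCell c) :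
    z ∈ interior (⋃ c ∈ T, gridCell c) := by
  obtain ⟨c, hc, hzc⟩ := mem_iUnion₂.mp hzT
  refine mem_interior_iff_mem_nhds.mpr ?_
  filter_upwards [eventually_mem_gridCell_gridFloor z] with w hw
  exact mem_biUnion (mem_of_no_exit hno hz hc hzc hw.1) (mem_gridCell_gridFloor w)

end Exit

open GridEdge in
/-- Without an exit, the interior of the union of the cells is a bounded open set with frontier in
`W` which contains all the points outside `W` of those cells. -/
theorem IsFull.exists_exit {W : Set ℂ} {T : Finset (ℤ × ℤ)} (hW : IsFull W) (hT : T.Nonempty)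
    (hTW : ∀ c ∈ T, ¬ gridCell c ⊆ W) :
    ∃ c ∈ T, ∃ e ∈ sides c, e ∈ freeEdges W ∧ ∀ c' ∈ T, e ∈ sides c' → c' = c := by
  by_contra! hno
  set K := ⋃ c ∈ T, gridCell c
  have hK : IsCompact K := T.isCompact_biUnion fun c _ => isCompact_gridCell c
  have hint : ∀ z ∈ K, z ∉ W → z ∈ interior K := fun z hzK hz =>
    mem_interior_of_no_exit hno hz hzK
  have hfrontier : frontier (interior K) ⊆ W := fun z hz => by
    by_contra hzW
    rw [isOpen_interior.frontier_eq] at hz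
    exact hz.2 (hint z (closure_minimal interior_subset hK.isClosed hz.1) hzW)
  have hintW : interior K ⊆ W :=
    hW isOpen_interior (hK.isBounded.subset interior_subset) hfrontier
  obtain ⟨c, hc⟩ := hT
  obtain ⟨z, hzc, hzW⟩ := not_subset.mp (hTW c hc)
  exact hzW (hintW (hint z (mem_biUnion hc hzc) hzW))

/-! ### Primitives of cocycles -/

section Primitive

open GridEdge

variable {W K : Set ℂ} {Γ : Type*} [Group Γ] {m : ℂ → ℂ → Γ}

theorem IsConvexCocycle.isFlat (hm : IsConvexCocycle W m) {c : ℤ × ℤ} (hc : gridCell c ⊆ W) :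
    IsFlat (fun e => m (gridPoint e.source) (gridPoint e.target)) c := by
  have hmc := hm (convex_gridCell c) hc
  simp only [IsFlat, source, target]
  rw [hmc, hmc] <;> simp [gridPoint_mem_gridCell]

theorem IsConvexCocycle.eq_mul_of_forall_sides (hm : IsConvexCocycle W m) {c : ℤ × ℤ}
    (hc : gridCell c ⊆ W) {φ : ℤ × ℤ → Γ}
    (hφ : ∀ e ∈ sides c, φ e.target = m (gridPoint e.source) (gridPoint e.target) * φ e.source)
    {v : ℤ × ℤ} (hv : gridPoint v ∈ gridCell c) :
    φ v = m (gridPoint c) (gridPoint v) * φ c := by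
  obtain ⟨i, j⟩ := c
  have hhoriz : φ (i + 1, j) = m (gridPoint (i, j)) (gridPoint (i + 1, j)) * φ (i, j) :=
    hφ (horiz i j) (by simp [horiz_mem_sides])
  have hvert : φ (i + 1, j + 1) =
      m (gridPoint (i + 1, j)) (gridPoint (i + 1, j + 1)) * φ (i + 1, j) :=
    hφ (vert (i + 1) j) (by simp [vert_mem_sides])
  obtain ⟨i', j'⟩ := v
  obtain ⟨(rfl : i' = i) | (rfl : i' = i + 1), (rfl : j' = j) | (rfl : j' = j + 1)⟩ :=
    gridPoint_mem_gridCell.mp hv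
  · rw [hm.self_eq_one (hc hv), one_mul]
  · exact hφ (vert i' j) (by simp [vert_mem_sides])
  · exact hhoriz
  · rw [hvert, hhoriz, ← mul_assoc, hm (convex_gridCell (i, j)) hc] <;>
      simp [gridPoint_mem_gridCell]

theorem IsConvexCocycle.exists_grid_potential (hm : IsConvexCocycle W m) (hW : IsFull W)
    (a b : ℤ) :
    ∃ φ : ℤ × ℤ → Γ, ∀ c ∈ Finset.Ico a b ×ˢ Finset.Ico a b, gridCell c ⊆ W →
      ∀ v, gridPoint v ∈ gridCell c → φ v = m (gridPoint c) (gridPoint v) * φ c := by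
  classical
  obtain ⟨ℓ, hℓ, hflat⟩ := exists_isFlat_labelling (free := freeEdges W)
    (T := (Finset.Ico a b ×ˢ Finset.Ico a b).filter (¬ gridCell · ⊆ W))
    (fun T' hT' hne => hW.exists_exit hne fun c hc => (Finset.mem_filter.mp (hT' hc)).2)
    (fun e => m (gridPoint e.source) (gridPoint e.target))
  have hsides : ∀ {c}, gridCell c ⊆ W →
      EqOn ℓ (fun e => m (gridPoint e.source) (gridPoint e.target)) (sides c) :=
    fun hc => hℓ.mono (sides_subset_compl_freeEdges hc)
  obtain ⟨φ, hφ⟩ := exists_potential (ℓ := ℓ) (a := a) (b := b) fun c hc => by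
    by_cases hcW : gridCell c ⊆ W
    · exact (hm.isFlat hcW).congr (hsides hcW)
    · exact hflat c (Finset.mem_filter.mpr ⟨hc, hcW⟩)
  exact ⟨φ, fun c hc hcW v hv =>
    hm.eq_mul_of_forall_sides hcW (fun e he => by rw [hφ c hc e he, hsides hcW he]) hv⟩

theorem IsConvexCocycle.exists_isPrimitiveOn_of_gridCell_subset (hm : IsConvexCocycle W m)
    (hW : IsFull W) (hK : IsBounded K) (hKW : ∀ z ∈ K, gridCell (gridFloor z) ⊆ W) :
    ∃ Φ, IsPrimitiveOn K m Φ := by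
  obtain ⟨N, hN⟩ := exists_gridFloor_mem_box hK
  obtain ⟨φ, hφ⟩ := hm.exists_grid_potential hW (-N) N
  refine ⟨fun z => m (gridPoint (gridFloor z)) z * φ (gridFloor z), fun z _ => ?_⟩
  filter_upwards [self_mem_nhdsWithin,
    (eventually_mem_gridCell_gridFloor z).filter_mono nhdsWithin_le_nhds] with w hwK ⟨hzw, hvw⟩
  have hmc := hm (convex_gridCell _) (hKW w hwK)
  have hw := mem_gridCell_gridFloor w
  have hv : gridPoint (gridFloor w) ∈ gridCell (gridFloor w) := by simp [gridPoint_mem_gridCell]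
  rw [hφ _ (hN w hwK) (hKW w hwK) _ hvw, ← mul_assoc, ← mul_assoc, hmc _ hvw _ hzw _ hw,
    hmc _ hv _ hvw _ hw]

theorem IsConvexCocycle.exists_isPrimitiveOn (hm : IsConvexCocycle W m) (hWo : IsOpen W)
    (hW : IsFull W) (hK : IsCompact K) (hKW : K ⊆ W) : ∃ Φ, IsPrimitiveOn K m Φ := by
  obtain ⟨ε, hε, hεW⟩ := hK.exists_thickening_subset_open hWo hKW
  obtain ⟨δ, hδ, hδε⟩ : ∃ δ : ℝ, 0 < δ ∧ δ * 2 < ε := ⟨ε / 3, by positivity, by linarith⟩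
  have hm_scaled := hm.comp_linearMap (LinearMap.lsmul ℝ ℂ δ)
  have hW_scaled : IsFull (univ ∩ (δ • · : ℂ → ℂ) ⁻¹' W) :=
    IsFull.inter_preimage (fun _ _ _ _ => subset_univ _) (by fun_prop) hW
  rw [univ_inter] at hW_scaled
  have hcell : ∀ w ∈ (δ⁻¹ • ·) '' K, gridCell (gridFloor w) ⊆ (δ • · : ℂ → ℂ) ⁻¹' W := by
    rintro _ ⟨z, hz, rfl⟩ w hw
    refine hεW (mem_thickening_iff.mpr ⟨z, hz, ?_⟩)
    have hnorm := norm_sub_le_two_of_mem_gridCell hw (mem_gridCell_gridFloor (δ⁻¹ • z))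
    calc dist (δ • w) z = dist (δ • w) (δ • δ⁻¹ • z) := by rw [smul_inv_smul₀ hδ.ne']
      _ = δ * ‖w - δ⁻¹ • z‖ := by rw [dist_smul₀, dist_eq_norm, Real.norm_of_nonneg hδ.le]
      _ ≤ δ * 2 := by gcongr
      _ < ε := hδε
  have hcont : Continuous (δ⁻¹ • · : ℂ → ℂ) := by fun_prop
  obtain ⟨Φ, hΦ⟩ := hm_scaled.exists_isPrimitiveOn_of_gridCell_subset hW_scaled
    (hK.image hcont).isBounded hcell
  refine ⟨Φ ∘ (δ⁻¹ • ·), ?_⟩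
  simpa only [LinearMap.lsmul_apply, smul_inv_smul₀ hδ.ne'] using hΦ.comp hcont.continuousOn

end Primitive

/-! ### Simple connectivity -/

theorem IsFull.simplyConnectedSpace {W : Set ℂ} (hW : IsFull W) (hWo : IsOpen W)
    (hWc : IsConnected W) : SimplyConnectedSpace W := by
  have : PathConnectedSpace W :=
    isPathConnected_iff_pathConnectedSpace.mp (hWo.isConnected_iff_isPathConnected.mp hWc)
  refine simply_connected_iff_loops_nullhomotopic.mpr ⟨this, fun x γ => ?_⟩
  have hrange : range (fun t => (γ t : ℂ)) ⊆ W := range_subset_iff.mpr fun t => (γ t).2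
  obtain ⟨Φ, hΦ⟩ := (isConvexCocycle_segmentHolonomy x).exists_isPrimitiveOn hWo hW
    (isCompact_range (by fun_prop : Continuous fun t => (γ t : ℂ))) hrange
  exact homotopic_refl_of_isPrimitiveOn_range hWo x γ hΦ

theorem isFull_iff_simplyConnectedSpace {S : Set ℂ} (hS : IsOpen S) :
    IsFull S ↔ ∀ x ∈ S, SimplyConnectedSpace (connectedComponentIn S x) :=
  ⟨fun h _ hx => (h.connectedComponentIn hS hx).simplyConnectedSpace hS.connectedComponentIn
    (isConnected_connectedComponentIn_iff.mpr hx), isFull_of_simplyConnectedSpace hS⟩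

theorem mem_iterate_inter_preimage {X : Type*} {U P : Set X} {f : X → X} {n : ℕ} {z : X} :
    z ∈ (fun S => U ∩ f ⁻¹' S)^[n] P ↔ (∀ k < n, f^[k] z ∈ U) ∧ f^[n] z ∈ P := by
  induction n generalizing z with
  | zero => simp
  | succ n ih =>
    rw [Function.iterate_succ_apply', mem_inter_iff, mem_preimage, ih, Nat.forall_lt_succ_left',
      and_assoc]
    rfl

theorem isOpen_isFull_iterate_inter_preimage {U P : Set ℂ} {f : ℂ → ℂ} (hU : IsOpen U)
    (hUfull : IsFull U) (hf : DifferentiableOn ℂ f U) (hP : IsOpen P) (hPfull : IsFull P) (n : ℕ) :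
    IsOpen ((fun S => U ∩ f ⁻¹' S)^[n] P) ∧ IsFull ((fun S => U ∩ f ⁻¹' S)^[n] P) := by
  induction n with
  | zero => exact ⟨hP, hPfull⟩
  | succ n ih =>
    rw [Function.iterate_succ_apply']
    exact ⟨hf.continuousOn.isOpen_inter_preimage hU ih.1, hUfull.inter_preimage hf ih.2⟩

/-- let `U ⊆ ℂ` be open with all connected components simply connected,
`f : U → ℂ` holomorphic, and `P ⊆ U` open with `f(P) ⊆ P` and all components simply
connected. Let `B` be the set of points whose orbit stays in `U` until entering `P`.
Then every connected component of `B` is simply connected. -/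
theorem stmt_14 (U : Set ℂ) (hU : IsOpen U)
    (hUsc : ∀ x ∈ U, SimplyConnectedSpace (connectedComponentIn U x))
    (f : ℂ → ℂ) (hf : DifferentiableOn ℂ f U)
    (P : Set ℂ) (hP : IsOpen P) (hPU : P ⊆ U) (hPf : f '' P ⊆ P)
    (hPsc : ∀ x ∈ P, SimplyConnectedSpace (connectedComponentIn P x))
    (B : Set ℂ)
    (hB : B = {z : ℂ | ∃ n : ℕ, (∀ k < n, f^[k] z ∈ U) ∧ f^[n] z ∈ P}) :
    ∀ x ∈ B, SimplyConnectedSpace (connectedComponentIn B x) := by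
  set T : Set ℂ → Set ℂ := fun S => U ∩ f ⁻¹' S
  have hBT : B = ⋃ n, T^[n] P := by
    ext z
    simp only [hB, mem_ofPred_eq, mem_iUnion, T, mem_iterate_inter_preimage]
  have hmono : Monotone fun n => T^[n] P :=
    Monotone.monotone_iterate_of_le_map (fun _ _ h => inter_subset_inter_right U (preimage_mono h))
      (subset_inter hPU (image_subset_iff.mp hPf))
  have hT : ∀ n, IsOpen (T^[n] P) ∧ IsFull (T^[n] P) :=
    isOpen_isFull_iterate_inter_preimage hU ((isFull_iff_simplyConnectedSpace hU).mpr hUsc) hf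
      hP ((isFull_iff_simplyConnectedSpace hP).mpr hPsc)
  have hopen : IsOpen B := hBT ▸ isOpen_iUnion fun n => (hT n).1
  have hfull : IsFull B :=
    hBT ▸ IsFull.iUnion hmono.directed_le (fun n => (hT n).1) fun n => (hT n).2
  exact (isFull_iff_simplyConnectedSpace hopen).mp hfull
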